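/- arXiv:0704.3645 — 5 statements merged into one kernel-verified Lean document; each statement's English description precedes it below -/
import Mathlib

section
/- Let 1 ∈ A ⊆ B be an inclusion of unital C*-algebras with A simple, and suppose there exists a faithful conditional expectation E : B → A admitting a quasi-basis. Then there exists a conditional expectation F : B → A admitting a quasi-basis which is pseudominimal, i.e., Index(F) is a scalar multiple of the unit of B and F(c b) = F(b c) for all c ∈ A' ∩ B and all b ∈ B. -/
structure CE {B : Type*} [CStarAlgebra B] [PartialOrder B] [StarOrderedRing B]
    (A : StarSubalgebra ℂ B) (E : B →ₗ[ℂ] B) : Prop where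
  range : ∀ x : B, E x ∈ A
  id : ∀ x ∈ A, E x = x
  bimod : ∀ a ∈ A, ∀ c ∈ A, ∀ x : B, E (a * x * c) = a * E x * c
  pos : ∀ x : B, 0 ≤ x → 0 ≤ E x
  faithful : ∀ x : B, E (star x * x) = 0 → x = 0

def Cn {B : Type*} [CStarAlgebra B] (A : StarSubalgebra ℂ B) (c : B) : Prop :=
  ∀ a ∈ A, c * a = a * c

section
variable {B : Type*} [CStarAlgebra B] {A : StarSubalgebra ℂ B}

theorem Cn.star {c : B} (h : Cn A c) : Cn A (star c) := fun a ha => by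
  have := congrArg Star.star (h (Star.star a) (star_mem ha))
  simpa using this.symm

theorem Cn.mul {c d : B} (h : Cn A c) (h' : Cn A d) : Cn A (c * d) := fun a ha => by
  rw [mul_assoc, h' a ha, ← mul_assoc, h a ha, mul_assoc]

theorem Cn.add {c d : B} (h : Cn A c) (h' : Cn A d) : Cn A (c + d) := fun a ha => by
  rw [add_mul, mul_add, h a ha, h' a ha]

theorem Cn.sub {c d : B} (h : Cn A c) (h' : Cn A d) : Cn A (c - d) := fun a ha => by
  rw [sub_mul, mul_sub, h a ha, h' a ha]

theorem Cn.smul {c : B} (z : ℂ) (h : Cn A c) : Cn A (z • c) := fun a ha => by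
  rw [smul_mul_assoc, mul_smul_comm, h a ha]

theorem Cn.one : Cn A (1 : B) := fun a _ => by simp

theorem Cn.sum {ι : Type*} {s : Finset ι} {f : ι → B} (h : ∀ i, Cn A (f i)) :
    Cn A (∑ i ∈ s, f i) := fun a ha => by
  rw [Finset.sum_mul, Finset.mul_sum]
  exact Finset.sum_congr rfl fun i _ => h i a ha

theorem center_scalar [Nontrivial B] 
    (hAsimple : ∀ I : Set B, I ⊆ (A : Set B) → IsClosed I → (0 : B) ∈ I →
      (∀ x ∈ I, ∀ y ∈ I, x + y ∈ I) → (∀ x ∈ I, -x ∈ I) →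
      (∀ x ∈ I, ∀ a ∈ A, a * x ∈ I) → (∀ x ∈ I, ∀ a ∈ A, x * a ∈ I) →
      I = {0} ∨ I = (A : Set B)) (hA : IsClosed (A : Set B))
    (c : B) (hc : c ∈ A) (h : Cn A c) : ∃ z : ℂ, c = z • 1 := by
  obtain ⟨z, hz⟩ := spectrum.nonempty c
  refine ⟨z, ?_⟩
  set d : B := c - z • 1 with hd
  have hdA : d ∈ A := sub_mem hc (A.smul_mem (one_mem A) z)
  have hdC : Cn A d := h.sub (Cn.one.smul z)
  let M : Submodule ℂ B := (A.toSubalgebra.toSubmodule.map (LinearMap.mulLeft ℂ d)).topologicalClosure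
  have key : ∀ x ∈ M, ∀ a ∈ A, a * x ∈ M ∧ x * a ∈ M := by
    intro x hx a ha
    constructor
    · refine map_mem_closure (f := fun x => a * x) (by fun_prop) hx ?_
      rintro _ ⟨y, hy, rfl⟩
      refine ⟨a * y, mul_mem (S := StarSubalgebra ℂ B) (s := A) ha hy, ?_⟩
      simp [← mul_assoc, hdC a ha]
    · refine map_mem_closure (f := fun x => x * a) (by fun_prop) hx ?_
      rintro _ ⟨y, hy, rfl⟩
      refine ⟨y * a, mul_mem (S := StarSubalgebra ℂ B) (s := A) hy ha, ?_⟩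
      simp [mul_assoc]
  have hdM : d ∈ M := subset_closure ⟨1, one_mem A, by simp⟩
  have hsub : (M : Set B) ⊆ (A : Set B) := by
    refine closure_minimal ?_ hA
    rintro _ ⟨y, hy, rfl⟩
    exact mul_mem (S := StarSubalgebra ℂ B) (s := A) hdA hy
  rcases hAsimple (M : Set B) hsub (Submodule.isClosed_topologicalClosure _) M.zero_mem
    (fun x hx y hy => M.add_mem hx hy) (fun x hx => M.neg_mem hx)
    (fun x hx a ha => (key x hx a ha).1) (fun x hx a ha => (key x hx a ha).2) with h0 | h1
  · have : d ∈ ({0} : Set B) := h0 ▸ hdM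
    exact sub_eq_zero.1 this
  · exfalso
    have h1M : (1 : B) ∈ M := by
      have : (1 : B) ∈ (A : Set B) := one_mem A
      rwa [← h1] at this
    have h1' : (1 : B) ∈ closure ((A.toSubalgebra.toSubmodule.map (LinearMap.mulLeft ℂ d)) : Set B) := h1M
    obtain ⟨_, ⟨y, hy, rfl⟩, hlt⟩ := Metric.mem_closure_iff.1 h1' 1 one_pos
    have hu : IsUnit (d * y) := by
      have := isUnit_one_sub_of_norm_lt_one (x := 1 - d * y) (by simpa [dist_eq_norm] using hlt)
      simpa using this
    have hcomm : d * y = y * d := hdC y hy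
    have hdu : IsUnit d := ((Commute.isUnit_mul_iff (hcomm : Commute d y)).1 hu).1
    apply hz
    rw [spectrum.mem_resolventSet_iff, Algebra.algebraMap_eq_smul_one]
    have := hdu.neg
    simpa [hd] using this
end

section
variable {B : Type*} [CStarAlgebra B] [PartialOrder B] [StarOrderedRing B]
  {A : StarSubalgebra ℂ B} {E : B →ₗ[ℂ] B}

theorem pos_map_star (hpos : ∀ x : B, 0 ≤ x → 0 ≤ E x) (x : B) : E (star x) = star (E x) := by
  have := map_star (PositiveLinearMap.mk₀ E hpos) x
  exact this

open scoped ComplexOrder in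
theorem scalar_nonneg [Nontrivial B] {z : ℂ} (h : (0 : B) ≤ z • 1) : 0 ≤ z := by
  rw [← Algebra.algebraMap_eq_smul_one] at h
  refine spectrum_nonneg_of_nonneg h (𝕜 := ℂ) ?_
  simp

namespace CE
variable (h : CE A E)
include h

theorem left {a : B} (ha : a ∈ A) (x : B) : E (a * x) = a * E x := by
  simpa using h.bimod a ha 1 (one_mem A) x
theorem right {a : B} (ha : a ∈ A) (x : B) : E (x * a) = E x * a := by
  simpa using h.bimod 1 (one_mem A) a ha x
theorem star' (x : B) : E (star x) = star (E x) := pos_map_star h.pos x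
theorem one' : E 1 = 1 := h.id 1 (one_mem A)

theorem cn {c : B} (hc : Cn A c) : Cn A (E c) := fun a ha => by
  rw [← h.right ha, hc a ha, h.left ha]

theorem schwarz (x : B) : star (E x) * E x ≤ E (star x * x) := by
  have h1 := h.pos _ (star_mul_self_nonneg (x - E x))
  have : E (star (x - E x) * (x - E x)) = E (star x * x) - star (E x) * E x := by
    simp only [star_sub, sub_mul, mul_sub, map_sub, h.right (h.range x), h.left (star_mem (h.range x)),
      h.star', h.id _ (h.range x)]
    abel
  rw [this] at h1
  exact sub_nonneg.1 h1

theorem mono {x y : B} (hxy : x ≤ y) : E x ≤ E y := by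
  have := h.pos _ (sub_nonneg.2 hxy)
  rw [map_sub] at this
  exact sub_nonneg.1 this

theorem norm_le {x : B} (hx : 0 ≤ x) : ‖E x‖ ≤ ‖x‖ := by
  have h1 : x ≤ algebraMap ℝ B ‖x‖ := IsSelfAdjoint.le_algebraMap_norm_self (IsSelfAdjoint.of_nonneg hx)
  have h2 := h.mono h1
  have h3 : E (algebraMap ℝ B ‖x‖) = algebraMap ℝ B ‖x‖ := by
    apply h.id
    rw [IsScalarTower.algebraMap_apply ℝ ℂ B]
    exact algebraMap_mem A _
  rw [h3] at h2
  exact (CStarAlgebra.norm_le_iff_le_algebraMap _ (norm_nonneg _) (h.pos x hx)).2 h2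

theorem cs (u x : B) : ‖E (star u * x)‖ ≤ ‖u‖ * √‖E (star x * x)‖ := by
  have h1 := h.schwarz (star u * x)
  have h2 : star (star u * x) * (star u * x) ≤ ((‖u‖ ^ 2 : ℝ) : ℂ) • (star x * x) := by
    have : u * star u ≤ algebraMap ℝ B (‖u‖ ^ 2) := by
      have := IsSelfAdjoint.le_algebraMap_norm_self (IsSelfAdjoint.mul_star_self u)
      rwa [CStarRing.norm_self_mul_star, ← pow_two] at this
    have := star_left_conjugate_le_conjugate this x
    convert this using 1
    · simp [mul_assoc]
    · rw [IsScalarTower.algebraMap_apply ℝ ℂ B, Algebra.algebraMap_eq_smul_one]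
      simp
  have h3 := h1.trans (h.mono h2)
  rw [map_smul] at h3
  have h4 := CStarAlgebra.norm_le_norm_of_nonneg_of_le (star_mul_self_nonneg _) h3
  rw [CStarRing.norm_star_mul_self, norm_smul] at h4
  apply abs_le_of_sq_le_sq' _ (by positivity) |>.2
  rw [mul_pow, Real.sq_sqrt (norm_nonneg _)]
  have : ‖((‖u‖ ^ 2 : ℝ) : ℂ)‖ = ‖u‖ ^ 2 := by simp
  rw [this] at h4
  nlinarith

theorem norm_bound {n : ℕ} {u : Fin n → B} (hqb : ∀ b : B, b = ∑ j, u j * E (star (u j) * b))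
    (x : B) : ‖x‖ ≤ (∑ j, ‖u j‖ ^ 2) * √‖E (star x * x)‖ := by
  conv_lhs => rw [hqb x]
  rw [Finset.sum_mul]
  refine norm_sum_le_of_le _ fun j _ => (norm_mul_le _ _).trans ?_
  have := h.cs (u j) x
  have := mul_le_mul_of_nonneg_left this (norm_nonneg (u j))
  linarith

theorem bessel {m : ℕ} {e : Fin m → B}
    (ho : ∀ i j, E (star (e i) * e j) = if i = j then 1 else 0) (x : B) :
    E (star (∑ i, e i * E (star (e i) * x)) * (∑ i, e i * E (star (e i) * x)))
      ≤ E (star x * x) := by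
  set p := ∑ i, e i * E (star (e i) * x) with hp
  have h1 : ∀ i, E (star (e i) * p) = E (star (e i) * x) := by
    intro i
    rw [hp, Finset.mul_sum, map_sum]
    simp only [← mul_assoc]
    simp_rw [h.right (h.range _), ho]
    simp
  have h2 : E (star p * p) = E (star p * x) := by
    have : star p = ∑ i, star (E (star (e i) * x)) * star (e i) := by
      rw [hp, star_sum]; simp
    rw [this, Finset.sum_mul, Finset.sum_mul, map_sum, map_sum]
    refine Finset.sum_congr rfl fun i _ => ?_
    rw [mul_assoc, mul_assoc, h.left (star_mem (h.range _)), h.left (star_mem (h.range _)), h1]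
  have h3 : E (star x * p) = E (star p * p) := by
    have := congrArg star h2
    rw [← h.star', ← h.star'] at this
    simpa using this.symm
  have h4 := h.pos _ (star_mul_self_nonneg (x - p))
  have h5 : E (star (x - p) * (x - p)) = E (star x * x) - E (star p * p) := by
    rw [star_sub, sub_mul, mul_sub, mul_sub, map_sub, map_sub, map_sub, h3, ← h2]
    abel
  rw [h5] at h4
  exact sub_nonneg.1 h4

theorem sum_bound {n : ℕ} {u : Fin n → B} (hqb : ∀ b : B, b = ∑ j, u j * E (star (u j) * b))
    (hqb₂ : ∀ b : B, b = ∑ j, E (b * u j) * star (u j))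
    {m : ℕ} {e : Fin m → B}
    (ho : ∀ i j, E (star (e i) * e j) = if i = j then 1 else 0) :
    ‖∑ i, e i * star (e i)‖ ≤ (∑ j, ‖u j‖ ^ 2) ^ 2 := by
  set K := ∑ j, ‖u j‖ ^ 2 with hK
  have hK0 : 0 ≤ K := Finset.sum_nonneg fun _ _ => by positivity
  have h1 : ∑ i, e i * star (e i) = ∑ j, (∑ i, e i * E (star (e i) * u j)) * star (u j) := by
    simp_rw [Finset.sum_mul]
    rw [Finset.sum_comm]
    refine Finset.sum_congr rfl fun i _ => ?_
    conv_lhs => rw [hqb₂ (star (e i))]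
    rw [Finset.mul_sum]
    simp [mul_assoc]
  rw [h1, pow_two]
  nth_rw 2 [hK]
  rw [Finset.mul_sum]
  refine norm_sum_le_of_le _ fun j _ => (norm_mul_le _ _).trans ?_
  have h2 := h.norm_bound hqb (∑ i, e i * E (star (e i) * u j))
  have h3 := CStarAlgebra.norm_le_norm_of_nonneg_of_le (h.pos _ (star_mul_self_nonneg _)) (h.bessel ho (u j))
  have h4 := h.norm_le (star_mul_self_nonneg (u j))
  rw [CStarRing.norm_star_mul_self, ← pow_two] at h4
  have h5 := Real.sqrt_le_sqrt (h3.trans h4)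
  rw [Real.sqrt_sq (norm_nonneg _)] at h5
  rw [norm_star]
  calc _ ≤ (K * ‖u j‖) * ‖u j‖ := by
        refine mul_le_mul_of_nonneg_right (h2.trans ?_) (norm_nonneg _)
        exact mul_le_mul_of_nonneg_left h5 hK0
    _ = _ := by ring

open scoped ComplexOrder in
theorem card_bound [Nontrivial B] (hs : ∀ c, Cn A c → ∃ z : ℂ, E c = z • 1)
    {n : ℕ} {u : Fin n → B} (hqb : ∀ b : B, b = ∑ j, u j * E (star (u j) * b))
    (hqb₂ : ∀ b : B, b = ∑ j, E (b * u j) * star (u j))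
    {m : ℕ} {e : Fin m → B} (hc : ∀ i, Cn A (e i))
    (ho : ∀ i j, E (star (e i) * e j) = if i = j then 1 else 0) :
    (m : ℝ) ≤ (∑ j, ‖u j‖ ^ 2) ^ 4 := by
  set K := ∑ j, ‖u j‖ ^ 2 with hK
  have hK0 : 0 ≤ K := Finset.sum_nonneg fun _ _ => by positivity
  have h1 : ∀ i, 1 ≤ K ^ 2 * ‖E (e i * star (e i))‖ := by
    intro i
    have a1 := h.norm_le (star_mul_self_nonneg (e i))
    rw [ho, CStarRing.norm_star_mul_self] at a1
    simp only [if_true, norm_one] at a1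
    have a2 := h.norm_bound hqb (star (e i))
    rw [norm_star, star_star] at a2
    calc (1:ℝ) ≤ ‖e i‖ ^ 2 := by linarith
      _ ≤ (K * √‖E (e i * star (e i))‖) ^ 2 := by gcongr
      _ = _ := by rw [mul_pow, Real.sq_sqrt (norm_nonneg _)]
  choose z hz using fun i => hs _ ((hc i).mul (hc i).star)
  have hz0 : ∀ i, z i = (‖E (e i * star (e i))‖ : ℂ) := by
    intro i
    have := h.pos _ (mul_star_self_nonneg (e i))
    rw [hz] at this
    have hzi : 0 ≤ z i := scalar_nonneg this
    rw [hz, norm_smul, norm_one, mul_one]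
    exact (RCLike.norm_of_nonneg' hzi).symm
  have h2 : ∑ i, ‖E (e i * star (e i))‖ = ‖E (∑ i, e i * star (e i))‖ := by
    rw [map_sum]
    have : ∑ i, E (e i * star (e i)) = ((∑ i, ‖E (e i * star (e i))‖ : ℝ) : ℂ) • (1:B) := by
      push_cast
      rw [Finset.sum_smul]
      refine Finset.sum_congr rfl fun i _ => ?_
      rw [← hz0, hz]
    rw [this, norm_smul, norm_one, mul_one, Complex.norm_of_nonneg]
    exact Finset.sum_nonneg fun _ _ => norm_nonneg _
  have h3 : ‖E (∑ i, e i * star (e i))‖ ≤ K ^ 2 :=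
    (h.norm_le (Finset.sum_nonneg fun i _ => mul_star_self_nonneg (e i))).trans (h.sum_bound hqb hqb₂ ho)
  calc (m : ℝ) = ∑ i : Fin m, 1 := by simp
    _ ≤ ∑ i, K ^ 2 * ‖E (e i * star (e i))‖ := Finset.sum_le_sum fun i _ => h1 i
    _ = K ^ 2 * ‖E (∑ i, e i * star (e i))‖ := by rw [← Finset.mul_sum, h2]
    _ ≤ K ^ 2 * K ^ 2 := by gcongr
    _ = _ := by ring

open scoped ComplexOrder in
theorem exists_basis [Nontrivial B] (hs : ∀ c, Cn A c → ∃ z : ℂ, E c = z • 1)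
    {n : ℕ} {u : Fin n → B} (hqb : ∀ b : B, b = ∑ j, u j * E (star (u j) * b))
    (hqb₂ : ∀ b : B, b = ∑ j, E (b * u j) * star (u j)) :
    ∃ (m : ℕ) (e : Fin m → B), (∀ i, Cn A (e i)) ∧
      ∀ x, Cn A x → x = ∑ i, e i * E (star (e i) * x) := by
  classical
  let P : ℕ → Prop := fun m => ∃ e : Fin m → B, (∀ i, Cn A (e i)) ∧
    (∀ i j, E (star (e i) * e j) = if i = j then 1 else 0)
  obtain ⟨N, hN⟩ := exists_nat_ge ((∑ j, ‖u j‖ ^ 2) ^ 4)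
  have hbd : ∀ m, P m → m ≤ N := by
    rintro m ⟨e, hc, ho⟩
    have := (h.card_bound hs hqb hqb₂ hc ho).trans hN
    exact_mod_cast this
  have hP0 : P 0 := ⟨fun i => i.elim0, fun i => i.elim0, fun i => i.elim0⟩
  have hPm : P (Nat.findGreatest P N) := Nat.findGreatest_spec (Nat.zero_le N) hP0
  have hmax : ∀ k, P k → k ≤ Nat.findGreatest P N := fun k hk =>
    Nat.le_findGreatest (hbd k hk) hk
  generalize Nat.findGreatest P N = m at hPm hmax
  obtain ⟨e, hc, ho⟩ := hPm
  refine ⟨m, e, hc, fun x hx => ?_⟩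
  by_contra hne
  set p := ∑ i, e i * E (star (e i) * x) with hp
  have h1 : ∀ i, E (star (e i) * p) = E (star (e i) * x) := by
    intro i
    rw [hp, Finset.mul_sum, map_sum]
    simp only [← mul_assoc]
    simp_rw [h.right (h.range _), ho]
    simp
  set y := x - p with hy
  have hy0 : y ≠ 0 := sub_ne_zero.2 hne
  have hyC : Cn A y := hx.sub (Cn.sum fun i => (hc i).mul (h.cn ((hc i).star.mul hx)))
  have h2 : ∀ i, E (star (e i) * y) = 0 := fun i => by
    rw [hy, mul_sub, map_sub, h1, sub_self]
  have h3 : ∀ i, E (star y * e i) = 0 := fun i => by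
    have := congrArg star (h2 i)
    rw [← h.star'] at this
    simpa using this
  obtain ⟨z, hz⟩ := hs _ (hyC.star.mul hyC)
  have hz1 : 0 ≤ z := by
    have := h.pos _ (star_mul_self_nonneg y)
    rw [hz] at this
    exact scalar_nonneg this
  have hz2 : z ≠ 0 := by
    rintro rfl
    exact hy0 (h.faithful y (by simpa using hz))
  obtain ⟨r, hr0, rfl⟩ : ∃ r : ℝ, 0 ≤ r ∧ z = r := by
    obtain ⟨a, b⟩ := Complex.nonneg_iff.1 hz1
    exact ⟨z.re, a, Complex.ext rfl b.symm⟩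
  have hr1 : r ≠ 0 := by exact_mod_cast hz2
  let w : B := (((√r)⁻¹ : ℝ) : ℂ) • y
  have hw : E (star w * w) = 1 := by
    simp only [w, star_smul, smul_mul_smul_comm, map_smul, hz, smul_smul]
    have : (star (((√r)⁻¹ : ℝ) : ℂ) * (((√r)⁻¹ : ℝ) : ℂ)) * (r : ℂ) = 1 := by
      have h' : star (((√r)⁻¹ : ℝ) : ℂ) = (((√r)⁻¹ : ℝ) : ℂ) := Complex.conj_ofReal _
      rw [h']
      norm_cast
      rw [← mul_inv, Real.mul_self_sqrt hr0, inv_mul_cancel₀ hr1]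
    rw [this, one_smul]
  have : P (m + 1) := by
    refine ⟨Fin.cons w e, ?_, ?_⟩
    · intro i
      refine Fin.cases ?_ ?_ i
      · exact hyC.smul _
      · intro i; simpa using hc i
    · intro i j
      refine Fin.cases ?_ ?_ i
      · refine Fin.cases ?_ ?_ j
        · simpa using hw
        · intro j
          rw [if_neg (Fin.succ_ne_zero j).symm]
          simp [w, h3]
      · intro i
        refine Fin.cases ?_ ?_ j
        · rw [if_neg (Fin.succ_ne_zero i)]
          simp [w, h2]
        · intro j
          simp [ho]
  have := hmax _ this
  omega

omit h [PartialOrder B] [StarOrderedRing B] in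
theorem inv_of_inj {m : ℕ} {e : Fin m → B} (hs : ∀ c, Cn A c → ∃ z : ℂ, E c = z • 1)
    (hc : ∀ i, Cn A (e i))
    (hex : ∀ x, Cn A x → x = ∑ i, e i * E (star (e i) * x))
    {d : B} (hd : Cn A d) (hinj : ∀ y, Cn A y → y * d = 0 → y = 0) :
    ∃ g, Cn A g ∧ g * d = 1 ∧ d * g = 1 := by
  let C : Submodule ℂ B :=
    { carrier := {c | Cn A c}
      add_mem' := fun a b => a.add b
      zero_mem' := fun a _ => by simp
      smul_mem' := fun z _ hx => hx.smul z }
  have hle : C ≤ Submodule.span ℂ (Set.range e) := by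
    intro x hx
    rw [hex x hx]
    refine Submodule.sum_mem _ fun i _ => ?_
    obtain ⟨z, hz⟩ := hs _ ((hc i).star.mul hx)
    rw [hz, mul_smul_comm, mul_one]
    exact Submodule.smul_mem _ _ (Submodule.subset_span ⟨i, rfl⟩)
  have : FiniteDimensional ℂ (Submodule.span ℂ (Set.range e)) :=
    FiniteDimensional.span_of_finite ℂ (Set.finite_range e)
  have : FiniteDimensional ℂ C := Submodule.finiteDimensional_of_le hle
  let R : C →ₗ[ℂ] C := (LinearMap.mulRight ℂ d).restrict (p := C) (q := C)
    (fun x hx => Cn.mul hx hd)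
  have hRi : Function.Injective R := by
    rw [← LinearMap.ker_eq_bot, LinearMap.ker_eq_bot']
    intro x hx
    have := congrArg Subtype.val hx
    exact Subtype.ext (hinj x.1 x.2 this)
  obtain ⟨g, hg⟩ := (LinearMap.injective_iff_surjective.1 hRi) ⟨1, Cn.one⟩
  have hg1 : g.1 * d = 1 := congrArg Subtype.val hg
  refine ⟨g.1, g.2, hg1, ?_⟩
  have := hinj (d * g.1 - 1) ((hd.mul g.2).sub Cn.one)
    (by rw [sub_mul, mul_assoc, hg1]; simp)
  exact sub_eq_zero.1 this


/-- The modular element. -/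
theorem exists_theta {n : ℕ} {u : Fin n → B}
    (hqb₂ : ∀ b : B, b = ∑ j, E (b * u j) * star (u j)) {c : B} (hc : Cn A c) :
    ∃ t, Cn A t ∧ ∀ b, E (c * b) = E (b * t) := by
  have key : ∀ b, E (c * b) = E (b * ∑ j, u j * E (c * star (u j))) := by
    intro b
    conv_lhs => rw [hqb₂ b]
    rw [Finset.mul_sum, Finset.mul_sum, map_sum, map_sum]
    refine Finset.sum_congr rfl fun j _ => ?_
    rw [← mul_assoc, ← mul_assoc, h.right (h.range _), hc _ (h.range _), mul_assoc,
      h.left (h.range _)]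
  refine ⟨_, ?_, key⟩
  generalize (∑ j, u j * E (c * star (u j))) = t at key
  intro a ha
  rw [← sub_eq_zero]
  apply h.faithful
  generalize star (t * a - a * t) = b
  rw [mul_sub, map_sub, ← mul_assoc, ← mul_assoc, h.right ha, ← key, ← key, ← mul_assoc,
    h.right ha, sub_self]

end CE

theorem cn_sqrt {x : B} (hx : ∀ a ∈ A, x * a = a * x) : Cn A (CFC.sqrt x) := by
  intro a ha
  rw [CFC.sqrt_eq_cfc]
  have : Commute x a := hx a ha
  exact (this.cfc_nnreal _)

theorem sum_star_zero {ι : Type*} {s : Finset ι} {f : ι → B}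
    (h : ∑ i ∈ s, f i * star (f i) = 0) : ∀ i ∈ s, f i = 0 := by
  intro i hi
  have := (Finset.sum_eq_zero_iff_of_nonneg (fun i _ => mul_star_self_nonneg (f i))).1 h i hi
  simpa using this

end

/-- If `1 ∈ A ⊆ B` is an inclusion of unital C*-algebras with `A` simple and there exists
a faithful conditional expectation `E : B → A` of index-finite type (i.e., admitting a
quasi-basis), then there exists a pseudominimal conditional expectation `F : B → A` of
index-finite type: `Index (F)` is a scalar multiple of the unit and `F (c * b) = F (b * c)`
for all `c ∈ A' ∩ B` and `b ∈ B`. -/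
theorem exists_pseudominimal_conditional_expectation
    {B : Type*} [CStarAlgebra B] [PartialOrder B] [StarOrderedRing B]
    (A : StarSubalgebra ℂ B) (hA : IsClosed (A : Set B))
    (hAsimple : ∀ I : Set B, I ⊆ (A : Set B) → IsClosed I → (0 : B) ∈ I →
      (∀ x ∈ I, ∀ y ∈ I, x + y ∈ I) → (∀ x ∈ I, -x ∈ I) →
      (∀ x ∈ I, ∀ a ∈ A, a * x ∈ I) → (∀ x ∈ I, ∀ a ∈ A, x * a ∈ I) →
      I = {0} ∨ I = (A : Set B))
    (E : B →ₗ[ℂ] B)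
    (hrange : ∀ x : B, E x ∈ A)
    (hid : ∀ x ∈ A, E x = x)
    (hbimod : ∀ a ∈ A, ∀ c ∈ A, ∀ x : B, E (a * x * c) = a * E x * c)
    (hpos : ∀ x : B, 0 ≤ x → 0 ≤ E x)
    (hfaithful : ∀ x : B, E (star x * x) = 0 → x = 0)
    (n : ℕ) (u : Fin n → B)
    (hqb₁ : ∀ b : B, b = ∑ j, u j * E (star (u j) * b))
    (hqb₂ : ∀ b : B, b = ∑ j, E (b * u j) * star (u j)) :
    ∃ F : B →ₗ[ℂ] B,
      (∀ x : B, F x ∈ A) ∧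
      (∀ x ∈ A, F x = x) ∧
      (∀ a ∈ A, ∀ c ∈ A, ∀ x : B, F (a * x * c) = a * F x * c) ∧
      (∀ x : B, 0 ≤ x → 0 ≤ F x) ∧
      ∃ (m : ℕ) (w : Fin m → B),
        (∀ b : B, b = ∑ j, w j * F (star (w j) * b)) ∧
        (∀ b : B, b = ∑ j, F (b * w j) * star (w j)) ∧
        (∃ μ : ℂ, ∑ j, w j * star (w j) = μ • (1 : B)) ∧
        (∀ c : B, (∀ a ∈ A, c * a = a * c) → ∀ b : B, F (c * b) = F (b * c)) := by
  rcases subsingleton_or_nontrivial B with hsub | hnt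
  · exact ⟨E, hrange, hid, hbimod, hpos, n, u, hqb₁, hqb₂, ⟨0, Subsingleton.elim _ _⟩,
      fun _ _ _ => Subsingleton.elim _ _⟩
  have h : CE A E := ⟨hrange, hid, hbimod, hpos, hfaithful⟩
  have hs : ∀ c, Cn A c → ∃ z : ℂ, E c = z • 1 := fun c hc =>
    center_scalar hAsimple hA _ (hrange c) (h.cn hc)
  obtain ⟨m, e, hec, hex⟩ := h.exists_basis hs hqb₁ hqb₂
  -- the tracial map
  let G : B →ₗ[ℂ] B := ∑ i, E ∘ₗ LinearMap.mulLeft ℂ (star (e i)) ∘ₗ LinearMap.mulRight ℂ (e i)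
  have hG : ∀ x, G x = ∑ i, E (star (e i) * x * e i) := fun x => by
    simp [G, mul_assoc]
  have hGrange : ∀ x, G x ∈ A := fun x => by
    rw [hG]; exact sum_mem fun i _ => hrange _
  have hGr : ∀ a ∈ A, ∀ x, G (x * a) = G x * a := fun a ha x => by
    rw [hG, hG, Finset.sum_mul]
    refine Finset.sum_congr rfl fun i _ => ?_
    rw [← h.right ha, mul_assoc _ (x * a), mul_assoc x, ← hec i a ha]
    simp only [mul_assoc]
  have hGl : ∀ a ∈ A, ∀ x, G (a * x) = a * G x := fun a ha x => by
    rw [hG, hG, Finset.mul_sum]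
    refine Finset.sum_congr rfl fun i _ => ?_
    rw [← h.left ha, ← mul_assoc, (hec i).star a ha]
    simp only [mul_assoc]
  have hGpos : ∀ x, 0 ≤ x → 0 ≤ G x := fun x hx => by
    rw [hG]
    exact Finset.sum_nonneg fun i _ => hpos _ (star_left_conjugate_nonneg hx _)
  have hGstar : ∀ x, G (star x) = star (G x) := pos_map_star hGpos
  have hGf : ∀ x, G (star x * x) = 0 → x = 0 := fun x hx => by
    rw [hG] at hx
    have h0 := (Finset.sum_eq_zero_iff_of_nonneg (fun i _ =>
      hpos _ (star_left_conjugate_nonneg (star_mul_self_nonneg x) (e i)))).1 hx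
    have h1 : ∀ i, x * e i = 0 := fun i => hfaithful _ (by
      have := h0 i (Finset.mem_univ i)
      simpa [mul_assoc] using this)
    rw [← mul_one x, hex 1 Cn.one, Finset.mul_sum]
    exact Finset.sum_eq_zero fun i _ => by rw [← mul_assoc, h1, zero_mul]
  have hGtr : ∀ c, Cn A c → ∀ b, G (c * b) = G (b * c) := fun c hc b => by
    choose z hz using fun i k => hs _ (((hec i).star.mul hc).mul (hec k))
    have hz1 : ∀ i, c * e i = ∑ k, z k i • e k := fun i => by
      rw [hex _ (hc.mul (hec i))]
      refine Finset.sum_congr rfl fun k _ => ?_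
      rw [← mul_assoc, hz]; simp
    have hz2 : ∀ i, star (e i) * c = ∑ k, z i k • star (e k) := fun i => by
      have := congrArg star (hex _ (hc.star.mul (hec i)))
      rw [star_mul, star_star, star_sum] at this
      rw [this]
      refine Finset.sum_congr rfl fun k _ => ?_
      rw [star_mul, ← h.star']
      simp only [star_mul, star_star, hz]
      simp
    rw [hG, hG]
    have e1 : ∀ i, star (e i) * (c * b) * e i = ∑ k, z i k • (star (e k) * b * e i) := fun i => by
      rw [← mul_assoc, hz2, Finset.sum_mul, Finset.sum_mul]; simp
    have e2 : ∀ i, star (e i) * (b * c) * e i = ∑ k, z k i • (star (e i) * b * e k) := fun i => by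
      rw [mul_assoc, mul_assoc, hz1, Finset.mul_sum, Finset.mul_sum]; simp [mul_assoc]
    simp_rw [e1, e2, map_sum, map_smul]
    rw [Finset.sum_comm]
  -- density
  choose t htC ht using fun i => h.exists_theta hqb₂ (hec i).star
  let d : B := ∑ i, e i * t i
  have hdC : Cn A d := Cn.sum fun i => (hec i).mul (htC i)
  have hGd : ∀ b, G b = E (b * d) := fun b => by
    rw [hG, Finset.mul_sum, map_sum]
    refine Finset.sum_congr rfl fun i _ => ?_
    rw [mul_assoc, ht, mul_assoc]
  obtain ⟨g, hgC, hgd, hdg⟩ := CE.inv_of_inj hs hec hex hdC (fun y _ hyd => hGf y (by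
    rw [hGd, mul_assoc, hyd]; simp))
  have hEG : ∀ b, E b = G (b * g) := fun b => by
    rw [hGd, mul_assoc, hgd, mul_one]
  have hgsa : star g = g := by
    have : ∀ x, G (x * (star g - g)) = 0 := fun x => by
      rw [mul_sub, map_sub, ← hEG, ← hGtr _ hgC.star]
      have : star g * x = star (star x * g) := by simp
      rw [this, hGstar, ← hEG, h.star', star_star, sub_self]
    exact sub_eq_zero.1 (hGf _ (this _))
  have hg0 : 0 ≤ g := by
    have hsa : IsSelfAdjoint g := hgsa
    have h1 : g⁻ * g = - (g⁻ * g⁻) := by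
      calc g⁻ * g = g⁻ * (g⁺ - g⁻) := by rw [CFC.posPart_sub_negPart g hsa]
        _ = _ := by rw [mul_sub, CFC.negPart_mul_posPart, zero_sub]
    have hn : 0 ≤ g⁻ := CFC.negPart_nonneg g
    have h2 := hpos _ hn
    rw [hEG, h1, map_neg] at h2
    have hst : star g⁻ = g⁻ := IsSelfAdjoint.of_nonneg hn
    have h3 : 0 ≤ G (g⁻ * g⁻) := hGpos _ (by
      have := star_mul_self_nonneg g⁻
      rwa [hst] at this)
    have h4 : G (star g⁻ * g⁻) = 0 := by
      rw [hst]; exact le_antisymm (neg_nonneg.1 h2) h3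
    exact (CFC.negPart_eq_zero_iff g hsa).1 (hGf _ h4)
  let s : B := CFC.sqrt g
  have hss : s * s = g := CFC.sqrt_mul_sqrt_self g hg0
  have hs0 : 0 ≤ s := CFC.sqrt_nonneg g
  have hsst : star s = s := IsSelfAdjoint.of_nonneg hs0
  have hsC : Cn A s := cn_sqrt hgC
  have hsds : s * d * s = 1 := by
    have h1 : s * s * d = 1 := by rw [hss, hgd]
    have h2 : d * (s * s) = 1 := by rw [hss, hdg]
    calc s * d * s = s * d * s * (s * s * d) := by rw [h1, mul_one]
      _ = s * (d * (s * s)) * s * d := by simp only [mul_assoc]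
      _ = 1 := by rw [h2, mul_one, h1]
  let w : Fin n → B := fun j => u j * s
  have hw : ∀ b, b = ∑ j, w j * G (star (w j) * b) := fun b => by
    have h1 : ∀ j, w j * G (star (w j) * b) = u j * E (star (u j) * (b * (s * d))) * s := fun j => by
      simp only [w, star_mul, hsst]
      rw [mul_assoc s, hGtr s hsC, mul_assoc, hsC _ (hGrange _), hGd]
      simp only [mul_assoc]
    simp_rw [h1]
    rw [← Finset.sum_mul, ← hqb₁, mul_assoc, hsds, mul_one]
  have hw₂ : ∀ b, b = ∑ j, G (b * w j) * star (w j) := fun b => by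
    have := congrArg star (hw (star b))
    rw [star_star, star_sum] at this
    refine this.trans (Finset.sum_congr rfl fun j _ => ?_)
    rw [star_mul, ← hGstar]; simp
  let I : B := ∑ j, w j * star (w j)
  have hIc : ∀ b, b * I = I * b := fun b => by
    have h1 : b * I = ∑ j, ∑ i, w i * G (star (w i) * (b * w j)) * star (w j) := by
      simp only [I, Finset.mul_sum]
      refine Finset.sum_congr rfl fun j _ => ?_
      rw [← mul_assoc]
      conv_lhs => rw [hw (b * w j)]
      rw [Finset.sum_mul]
    rw [h1, Finset.sum_comm]
    simp only [I, Finset.sum_mul]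
    refine Finset.sum_congr rfl fun i _ => ?_
    rw [mul_assoc (w i)]
    conv_rhs => rw [hw₂ (star (w i) * b)]
    rw [Finset.mul_sum]
    simp only [mul_assoc]
  have hI0 : 0 ≤ I := Finset.sum_nonneg fun j _ => mul_star_self_nonneg _
  have hIC : Cn A I := fun a _ => (hIc a).symm
  obtain ⟨J, -, hJI, hIJ⟩ := CE.inv_of_inj hs hec hex hIC (fun y _ hy => by
    have h1 : ∑ j, (y * w j) * star (y * w j) = 0 := by
      have : y * I * star y = 0 := by rw [hy, zero_mul]
      rw [← this]
      simp only [I, Finset.mul_sum, Finset.sum_mul]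
      exact Finset.sum_congr rfl fun j _ => by simp [mul_assoc]
    have h2 := sum_star_zero h1
    rw [← star_eq_zero, hw (star y)]
    refine Finset.sum_eq_zero fun j hj => ?_
    rw [← star_mul, h2 j hj]; simp)
  have hJc : ∀ b, J * b = b * J := fun b => by
    calc J * b = J * (b * I) * J := by rw [mul_assoc, mul_assoc b, hIJ, mul_one]
      _ = b * J := by rw [hIc, ← mul_assoc, hJI, one_mul]
  have hJ0 : 0 ≤ J := by
    have := star_left_conjugate_nonneg hI0 J
    rw [mul_assoc, hIJ, mul_one] at this
    exact star_nonneg_iff.1 this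
  have hT : ∀ x : B, 0 ≤ x → (∀ b, x * b = b * x) → ∀ b, CFC.sqrt x * b = b * CFC.sqrt x :=
    fun x _ hxb b => cn_sqrt (A := ⊤) (fun a _ => hxb a) b trivial
  let r : B := CFC.sqrt J
  have hrr : r * r = J := CFC.sqrt_mul_sqrt_self J hJ0
  have hrst : star r = r := IsSelfAdjoint.of_nonneg (CFC.sqrt_nonneg J)
  have hrc : ∀ b, r * b = b * r := hT J hJ0 hJc
  let q : B := CFC.sqrt I
  have hqq : q * q = I := CFC.sqrt_mul_sqrt_self I hI0
  have hqst : star q = q := IsSelfAdjoint.of_nonneg (CFC.sqrt_nonneg I)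
  have hqc : ∀ b, q * b = b * q := hT I hI0 (fun b => (hIc b).symm)
  have hGI : Cn A (G I) := fun a ha => by rw [← hGr a ha, ← hGl a ha, hIc]
  obtain ⟨μ, hμ⟩ := center_scalar hAsimple hA _ (hGrange I) hGI
  obtain ⟨ρ, hρ0, rfl⟩ : ∃ ρ : ℝ, 0 ≤ ρ ∧ μ = ρ := by
    have h1 := hGpos _ hI0
    rw [hμ] at h1
    obtain ⟨a, b⟩ := Complex.nonneg_iff.1 (scalar_nonneg h1)
    exact ⟨μ.re, a, Complex.ext rfl b.symm⟩
  have hρ : ρ ≠ 0 := by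
    rintro rfl
    have : q = 0 := hGf _ (by rw [hqst, hqq, hμ]; simp)
    have hI : I = 0 := by rw [← hqq, this, zero_mul]
    rw [hI, mul_zero] at hJI
    exact zero_ne_one hJI
  have hρc : (ρ : ℂ) ≠ 0 := by exact_mod_cast hρ
  let F : B →ₗ[ℂ] B := ((ρ⁻¹ : ℝ) : ℂ) • (G ∘ₗ LinearMap.mulLeft ℂ I)
  have hF : ∀ x, F x = ((ρ⁻¹ : ℝ) : ℂ) • G (I * x) := fun x => rfl
  have hFpos : ∀ x : B, 0 ≤ x → 0 ≤ F x := fun x hx => by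
    have h1 : I * x = star q * x * q := by rw [hqst, mul_assoc, ← hqc, ← mul_assoc, hqq]
    rw [hF, h1]
    have h2 := hGpos _ (star_left_conjugate_nonneg hx q)
    have := smul_nonneg (inv_nonneg.2 hρ0) h2
    rwa [Complex.coe_smul]
  let σ : ℂ := ((√ρ : ℝ) : ℂ)
  have hσst : star σ = σ := Complex.conj_ofReal _
  have hσσ : σ * σ = ρ := by
    simp only [σ]; norm_cast; exact Real.mul_self_sqrt hρ0
  have hrIr : ∀ b, r * (I * (r * b)) = b := fun b => by
    rw [← mul_assoc I, ← hIc r, mul_assoc r, ← mul_assoc r r, hrr, ← mul_assoc, hJI, one_mul]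
  let v : Fin n → B := fun j => σ • (w j * r)
  have hv : ∀ b : B, b = ∑ j, v j * F (star (v j) * b) := fun b => by
    have h1 : ∀ j, v j * F (star (v j) * b) = r * (w j * G (star (w j) * (I * (r * b)))) := by
      intro j
      have h2 : I * (r * (star (w j) * b)) = star (w j) * (I * (r * b)) := by
        rw [← mul_assoc r, hrc, mul_assoc, ← mul_assoc I, ← hIc, mul_assoc]
      simp only [v, star_smul, star_mul, hrst, hσst, hF, smul_mul_assoc, mul_smul_comm, map_smul,
        smul_smul, mul_assoc, h2]
      rw [← mul_assoc r, hrc (w j), mul_assoc]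
      have : (((ρ⁻¹ : ℝ) : ℂ) * (σ * σ)) = 1 := by
        rw [hσσ]; push_cast; exact inv_mul_cancel₀ hρc
      rw [this, one_smul]
      simp only [w, mul_assoc]
    simp_rw [h1]
    rw [← Finset.mul_sum, ← hw, hrIr]
  refine ⟨F, fun x => A.smul_mem (hGrange _) _, fun x hx => ?_, fun a ha c hc x => ?_, hFpos, n, v,
    hv, fun b => ?_, ⟨ρ, ?_⟩, fun c hc b => ?_⟩
  · rw [hF, hGr x hx, hμ, smul_mul_assoc, one_mul, smul_smul]
    push_cast
    rw [inv_mul_cancel₀ hρc, one_smul]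
  · rw [hF, hF, ← mul_assoc, hGr c hc, ← mul_assoc, ← hIc, mul_assoc a, hGl a ha]
    simp
  · have := congrArg star (hv (star b))
    rw [star_star, star_sum] at this
    refine this.trans (Finset.sum_congr rfl fun j _ => ?_)
    rw [star_mul, ← pos_map_star hFpos]; simp
  · have h1 : ∀ j, v j * star (v j) = (ρ : ℂ) • (J * (w j * star (w j))) := fun j => by
      simp only [v, star_smul, star_mul, hrst, hσst, smul_mul_smul_comm, hσσ]
      rw [← hrc (w j), mul_assoc r, ← mul_assoc (w j), ← hrc (w j), mul_assoc r, ← mul_assoc r, hrr]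
    simp_rw [h1]
    rw [← Finset.smul_sum, ← Finset.mul_sum]
    exact congrArg _ hJI
  · rw [hF, hF, ← mul_assoc, ← hIc, mul_assoc, hGtr c hc, mul_assoc]
end

section
/- Let 1 ∈ A ⊆ B be an inclusion of unital C*-algebras with A simple, and suppose there exists a faithful conditional expectation E : B → A admitting a quasi-basis. Let p be a nonzero projection in A' ∩ B, and set pAp = {p a p : a ∈ A} and pBp = {p b p : b ∈ B}, which are C*-subalgebras of B with unit p. Then there exists a conditional expectation F from pBp onto pAp admitting a quasi-basis; that is, F : pBp → pAp is linear and positive, F(y) = y for all y ∈ pAp, F(y x y') = y F(x) y' for all y, y' ∈ pAp and x ∈ pBp, and there exist w_1, …, w_m ∈ pBp such that x = Σ_{j=1}^m w_j F(w_j^* x) = Σ_{j=1}^m F(x w_j) w_j^* for all x ∈ pBp. -/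
lemma aux_proj {M : Type*} [CStarAlgebra M] (t : M) (ht : t * t = t) :
    ∃ q : M, star q = q ∧ q * t = t ∧ t * q = q := by
  set z : M := 1 + star (star t - t) * (star t - t) with hz
  have ht' : star t * star t = star t := by rw [← star_mul, ht]
  have hu : IsUnit z := by
    have h : (-1 : ℝ) ∉ spectrum ℝ (star (star t - t) * (star t - t)) := fun h => by
      have := spectrum_star_mul_self_nonneg _ h
      linarith
    rw [spectrum.notMem_iff] at h
    rw [← IsUnit.neg_iff] at h
    convert h using 1
    simp [hz]
    abel
  have hz' : z = 1 + (t * star t - t - star t + star t * t) := by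
    rw [hz, star_sub, star_star, sub_mul, mul_sub, mul_sub, ht, ht']; abel
  have e1 : t * z = t * star t * t := by
    rw [hz']; simp only [mul_add, mul_sub, mul_one, ← mul_assoc, ht]; abel
  have e2 : z * t = t * star t * t := by
    rw [hz']; simp only [add_mul, sub_mul, one_mul, mul_assoc, ht]; abel
  have hzs : star z = z := by simp [hz]
  obtain ⟨v, hv⟩ := hu
  have c1 : Commute t (v : M) := by rw [hv]; exact e1.trans e2.symm
  have c2 : Commute (star t) (v : M) := by
    have := congrArg star (e1.trans e2.symm)
    rw [star_mul, star_mul, hzs] at this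
    rw [hv]; exact this.symm
  have d1 : Commute t (↑v⁻¹ : M) := c1.units_inv_right
  have d2 : Commute (star t) (↑v⁻¹ : M) := c2.units_inv_right
  have hvs : star (↑v⁻¹ : M) = ↑v⁻¹ := by
    have : star v = v := Units.ext (by simpa [hv] using hzs)
    rw [← Units.coe_star, star_inv, this]
  refine ⟨t * star t * ↑v⁻¹, ?_, ?_, ?_⟩
  · rw [star_mul, star_mul, star_star, hvs]
    exact ((d1.mul_left d2).eq).symm
  · rw [mul_assoc, ← d1.eq, ← mul_assoc, ← e1, ← hv, mul_assoc, Units.mul_inv, mul_one]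
  · rw [← mul_assoc, ← mul_assoc, ht]

lemma aux_matproj {C : Type*} [CStarAlgebra C] {n : ℕ} (t : Fin n → Fin n → C)
    (ht : ∀ i j, ∑ k, t i k * t k j = t i j) :
    ∃ q : Fin n → Fin n → C, (∀ i j, star (q j i) = q i j) ∧
      (∀ i j, ∑ k, q i k * t k j = t i j) ∧ (∀ i j, ∑ k, t i k * q k j = q i j) := by
  let _ : PartialOrder C := CStarAlgebra.spectralOrder C
  have _ : StarOrderedRing C := CStarAlgebra.spectralOrderedRing C
  let t' : CStarMatrix (Fin n) (Fin n) C := CStarMatrix.ofMatrix (Matrix.of t)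
  obtain ⟨q, h1, h2, h3⟩ := aux_proj t' (by ext i j; exact ht i j)
  refine ⟨fun i j => q i j, fun i j => ?_, fun i j => ?_, fun i j => ?_⟩
  · have := congrFun (congrFun h1 i) j
    rwa [CStarMatrix.star_apply] at this
  · exact congrFun (congrFun h2 i) j
  · exact congrFun (congrFun h3 i) j

lemma aux_center {B : Type*} [CStarAlgebra B] [PartialOrder B] [StarOrderedRing B] [Nontrivial B]
    (A : StarSubalgebra ℂ B) (hA : IsClosed (A : Set B))
    (hAsimple : ∀ I : Set B, I ⊆ (A : Set B) → IsClosed I → (0 : B) ∈ I →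
      (∀ x ∈ I, ∀ y ∈ I, x + y ∈ I) → (∀ x ∈ I, -x ∈ I) →
      (∀ x ∈ I, ∀ a ∈ A, a * x ∈ I) → (∀ x ∈ I, ∀ a ∈ A, x * a ∈ I) →
      I = {0} ∨ I = (A : Set B))
    (a : B) (ha : a ∈ A) (hc : ∀ b ∈ A, a * b = b * a) (hpos : 0 ≤ a) :
    a = algebraMap ℝ B ‖a‖ := by
  have hs : ‖a‖ ∈ spectrum ℝ a := CStarAlgebra.norm_mem_spectrum_of_nonneg hpos
  set d : B := algebraMap ℝ B ‖a‖ - a with hd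
  have hdu : ¬ IsUnit d := by rwa [spectrum.mem_iff] at hs
  have hdA : d ∈ A := by
    refine sub_mem ?_ ha
    have : algebraMap ℝ B ‖a‖ = algebraMap ℂ B (‖a‖ : ℂ) := by
      simp [Algebra.algebraMap_eq_smul_one]
    rw [this]; exact algebraMap_mem A _
  have hdc : ∀ b ∈ A, d * b = b * d := fun b hb => by
    rw [hd, sub_mul, mul_sub, hc b hb, Algebra.commutes]
  set S : Set B := (fun b => d * b) '' (A : Set B) with hS
  have hSA : S ⊆ (A : Set B) := by
    rintro _ ⟨b, hb, rfl⟩; exact mul_mem hdA hb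
  have h := hAsimple (closure S) (closure_minimal hSA hA) isClosed_closure
    (subset_closure ⟨0, zero_mem A, by simp⟩)
    (fun x hx y hy => map_mem_closure₂ continuous_add hx hy (by
      rintro _ ⟨b, hb, rfl⟩ _ ⟨b', hb', rfl⟩
      exact ⟨b + b', add_mem hb hb', mul_add _ _ _⟩))
    (fun x hx => map_mem_closure continuous_neg hx (by
      rintro _ ⟨b, hb, rfl⟩
      exact ⟨-b, neg_mem hb, mul_neg _ _⟩))
    (fun x hx c hcA => map_mem_closure (continuous_const_mul c) hx (by
      rintro _ ⟨b, hb, rfl⟩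
      exact ⟨c * b, mul_mem hcA hb, by simp only [← mul_assoc, hdc c hcA]⟩))
    (fun x hx c hcA => map_mem_closure (f := fun y => y * c) (continuous_mul_const c) hx (by
      rintro _ ⟨b, hb, rfl⟩
      exact ⟨b * c, mul_mem hb hcA, by simp only [mul_assoc]⟩))
  rcases h with h | h
  · have : d ∈ closure S := subset_closure ⟨1, one_mem A, mul_one _⟩
    rw [h] at this
    exact (sub_eq_zero.1 this).symm
  · exfalso
    have h1 : (1 : B) ∈ closure S := by rw [h]; exact one_mem A
    obtain ⟨_, ⟨b, hb, rfl⟩, hlt⟩ := Metric.mem_closure_iff.1 h1 1 one_pos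
    rw [dist_eq_norm] at hlt
    have := isUnit_one_sub_of_norm_lt_one hlt
    rw [sub_sub_cancel] at this
    exact hdu ((Commute.isUnit_mul_iff (hdc b hb)).1 this).1

lemma aux_star {B : Type*} [CStarAlgebra B] [PartialOrder B] [StarOrderedRing B]
    (E : B →ₗ[ℂ] B) (hpos : ∀ x : B, 0 ≤ x → 0 ≤ E x) (x : B) : E (star x) = star (E x) := by
  have hsa : ∀ y : B, IsSelfAdjoint y → IsSelfAdjoint (E y) := fun y hy => by
    rw [← CFC.posPart_sub_negPart y hy, map_sub]
    exact (IsSelfAdjoint.of_nonneg (hpos _ (CFC.posPart_nonneg y))).sub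
      (IsSelfAdjoint.of_nonneg (hpos _ (CFC.negPart_nonneg y)))
  have hx := realPart_add_I_smul_imaginaryPart x
  have h1 := (hsa _ (realPart x).2).star_eq
  have h2 := (hsa _ (imaginaryPart x).2).star_eq
  have h3 := (realPart x).2.star_eq
  have h4 := (imaginaryPart x).2.star_eq
  rw [← hx]
  simp only [star_add, star_smul, map_add, map_smul, h1, h2, h3, h4]

/-- If `1 ∈ A ⊆ B` is an inclusion of unital C*-algebras of index-finite type with `A`
simple, and `p` is a nonzero projection in the relative commutant `A' ∩ B`, then the
cut-down inclusion `p A p ⊆ p B p` admits a conditional expectation of index-finite type,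
i.e., there is a conditional expectation `F` from `p B p` onto `p A p` with a quasi-basis. -/
theorem exists_conditional_expectation_cutdown
    {B : Type*} [CStarAlgebra B] [PartialOrder B] [StarOrderedRing B]
    (A : StarSubalgebra ℂ B) (hA : IsClosed (A : Set B))
    (hAsimple : ∀ I : Set B, I ⊆ (A : Set B) → IsClosed I → (0 : B) ∈ I →
      (∀ x ∈ I, ∀ y ∈ I, x + y ∈ I) → (∀ x ∈ I, -x ∈ I) →
      (∀ x ∈ I, ∀ a ∈ A, a * x ∈ I) → (∀ x ∈ I, ∀ a ∈ A, x * a ∈ I) →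
      I = {0} ∨ I = (A : Set B))
    (E : B →ₗ[ℂ] B)
    (hrange : ∀ x : B, E x ∈ A)
    (hid : ∀ x ∈ A, E x = x)
    (hbimod : ∀ a ∈ A, ∀ c ∈ A, ∀ x : B, E (a * x * c) = a * E x * c)
    (hpos : ∀ x : B, 0 ≤ x → 0 ≤ E x)
    (hfaithful : ∀ x : B, E (star x * x) = 0 → x = 0)
    (n : ℕ) (u : Fin n → B)
    (hqb₁ : ∀ b : B, b = ∑ j, u j * E (star (u j) * b))
    (hqb₂ : ∀ b : B, b = ∑ j, E (b * u j) * star (u j))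
    (p : B) (hpproj : star p = p ∧ p * p = p) (hp0 : p ≠ 0)
    (hpcomm : ∀ a ∈ A, p * a = a * p) :
    ∃ F : B →ₗ[ℂ] B,
      (∀ x ∈ {z : B | ∃ b : B, z = p * b * p},
        F x ∈ {z : B | ∃ a ∈ A, z = p * a * p}) ∧
      (∀ y ∈ {z : B | ∃ a ∈ A, z = p * a * p}, F y = y) ∧
      (∀ y ∈ {z : B | ∃ a ∈ A, z = p * a * p},
        ∀ y' ∈ {z : B | ∃ a ∈ A, z = p * a * p},
        ∀ x ∈ {z : B | ∃ b : B, z = p * b * p}, F (y * x * y') = y * F x * y') ∧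
      (∀ x ∈ {z : B | ∃ b : B, z = p * b * p}, 0 ≤ x → 0 ≤ F x) ∧
      ∃ (m : ℕ) (w : Fin m → B),
        (∀ j, w j ∈ {z : B | ∃ b : B, z = p * b * p}) ∧
        (∀ x ∈ {z : B | ∃ b : B, z = p * b * p},
          x = ∑ j, w j * F (star (w j) * x)) ∧
        (∀ x ∈ {z : B | ∃ b : B, z = p * b * p},
          x = ∑ j, F (x * w j) * star (w j)) := by
  obtain ⟨hps, hpp⟩ := hpproj
  have : Nontrivial B := ⟨⟨p, 0, hp0⟩⟩
  have hstar := aux_star E hpos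
  have hl : ∀ a ∈ A, ∀ x, E (a * x) = a * E x := fun a ha x => by
    simpa using hbimod a ha 1 (one_mem A) x
  have hr : ∀ a ∈ A, ∀ x, E (x * a) = E x * a := fun a ha x => by
    simpa using hbimod 1 (one_mem A) a ha x
  have hp_nn : 0 ≤ p := by
    have := star_mul_self_nonneg p
    rwa [hps, hpp] at this
  -- the scalar `E p`
  have hEp : E p = algebraMap ℝ B ‖E p‖ := aux_center A hA hAsimple (E p) (hrange p)
    (fun b hb => by rw [← hr b hb, ← hl b hb, hpcomm b hb]) (hpos p hp_nn)
  have hEp0 : E p ≠ 0 := fun h => hp0 (hfaithful p (by rw [hps, hpp, h]))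
  set c : ℝ := ‖E p‖ with hc
  have hc0 : 0 < c := norm_pos_iff.2 hEp0
  have hEp' : E p = (c : ℂ) • (1 : B) := by
    rw [hEp, Algebra.algebraMap_eq_smul_one, Complex.coe_smul]
  have hcc : ((c⁻¹ : ℝ) : ℂ) * (c : ℂ) = 1 := by
    rw [← Complex.ofReal_mul, inv_mul_cancel₀ hc0.ne', Complex.ofReal_one]
  let F : B →ₗ[ℂ] B := ((c⁻¹ : ℝ) : ℂ) • (LinearMap.mulRight ℂ p ∘ₗ E)
  have hF : ∀ x, F x = ((c⁻¹ : ℝ) : ℂ) • (E x * p) := fun x => rfl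
  have hpA : ∀ a ∈ A, p * a * p = a * p := fun a ha => by
    rw [hpcomm a ha, mul_assoc, hpp]
  -- the orthogonal projection onto `p B p`
  have hclosed : IsClosed (A : Set B) := hA
  let t : Fin n → Fin n → A := fun i j => ⟨E (star (u i) * (p * u j * p)), hrange _⟩
  have key : ∀ (y x : B), ∑ k, E (y * (p * u k * p)) * E (star (u k) * x)
      = E (y * (p * x * p)) := fun y x => by
    conv_rhs => rw [hqb₁ x]
    rw [Finset.mul_sum, Finset.sum_mul, Finset.mul_sum, map_sum]
    refine Finset.sum_congr rfl fun k _ => ?_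
    rw [← hr _ (hrange _)]
    congr 1
    simp only [mul_assoc]
    rw [hpcomm _ (hrange _)]
  obtain ⟨q, hq1, hq2, hq3⟩ := aux_matproj t (fun i j => by
    apply Subtype.ext
    simp only [t, AddSubmonoidClass.coe_finsetSum, MulMemClass.coe_mul]
    rw [key]
    congr 2
    simp only [← mul_assoc, hpp]
    simp only [mul_assoc, hpp])
  have hq1' : ∀ i j, star (q j i : B) = q i j := fun i j => congrArg Subtype.val (hq1 i j)
  have hq2' : ∀ i j, ∑ k, (q i k : B) * (t k j : B) = t i j := fun i j => by
    simpa using congrArg Subtype.val (hq2 i j)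
  have hq3' : ∀ i j, ∑ k, (t i k : B) * (q k j : B) = q i j := fun i j => by
    simpa using congrArg Subtype.val (hq3 i j)
  let v : Fin n → B := fun j => ∑ i, u i * (q i j : B)
  have hv : ∀ j, v j = p * (∑ k, u k * (q k j : B)) * p := fun j => by
    have h1 : v j = ∑ k, (p * u k * p) * (q k j : B) := by
      have : ∀ k, (p * u k * p) * (q k j : B) = ∑ i, u i * ((t i k : B) * q k j) := fun k => by
        conv_lhs => rw [hqb₁ (p * u k * p)]
        rw [Finset.sum_mul]
        exact Finset.sum_congr rfl fun i _ => mul_assoc _ _ _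
      simp only [this]
      rw [Finset.sum_comm]
      refine Finset.sum_congr rfl fun i _ => ?_
      rw [← Finset.mul_sum, hq3']
    rw [h1, Finset.mul_sum, Finset.sum_mul]
    refine Finset.sum_congr rfl fun k _ => ?_
    simp only [mul_assoc]
    rw [hpcomm _ (q k j).2]
  have hvp : ∀ j, v j * p = v j := fun j => by
    rw [hv j, mul_assoc, hpp]
  have hrec : ∀ x, p * x * p = x → x = ∑ j, v j * E (star (v j) * x) := fun x hx => by
    have ht : ∀ i, ∑ k, (t i k : B) * E (star (u k) * x) = E (star (u i) * x) := fun i => by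
      have := key (star (u i)) x
      rw [hx] at this
      exact this
    have hqx : ∀ i, ∑ k, (q i k : B) * E (star (u k) * x) = E (star (u i) * x) := fun i => by
      have : ∀ k, (q i k : B) * E (star (u k) * x)
          = ∑ l, (q i k : B) * (t k l : B) * E (star (u l) * x) := fun k => by
        rw [← ht k, Finset.mul_sum]
        exact Finset.sum_congr rfl fun l _ => (mul_assoc _ _ _).symm
      simp only [this]
      rw [Finset.sum_comm]
      simp only [← Finset.sum_mul, hq2', ht]
    have hEv : ∀ j, E (star (v j) * x) = E (star (u j) * x) := fun j => by
      rw [← hqx j]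
      simp only [v, star_sum, star_mul, hq1', Finset.sum_mul, map_sum, mul_assoc]
      exact Finset.sum_congr rfl fun k _ => hl _ (q j k).2 _
    simp only [hEv, v, Finset.sum_mul]
    rw [Finset.sum_comm]
    simp only [mul_assoc, ← Finset.mul_sum, hqx]
    exact hqb₁ x
  let s : ℂ := ((Real.sqrt c : ℝ) : ℂ)
  have hss : s * s * ((c⁻¹ : ℝ) : ℂ) = 1 := by
    simp only [s]
    rw [← Complex.ofReal_mul, Real.mul_self_sqrt hc0.le, mul_comm, hcc]
  have hsst : star s = s := Complex.conj_ofReal _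
  have hFstar : ∀ x, F (star x) = star (F x) := fun x => by
    rw [hF, hF, star_smul, star_mul, hps, hstar, ← hstar, hpcomm _ (hrange _)]
    congr 1
    exact (Complex.conj_ofReal _).symm
  have hrec2 : ∀ x, p * x * p = x → x = ∑ j, (s • v j) * F (star (s • v j) * x) := fun x hx => by
    conv_lhs => rw [hrec x hx]
    refine Finset.sum_congr rfl fun j _ => ?_
    rw [hF, star_smul, hsst, smul_mul_assoc s (star (v j)) x, map_smul]
    simp only [smul_mul_assoc, mul_smul_comm, smul_smul]
    rw [← hpcomm _ (hrange _), ← mul_assoc, hvp]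
    have : ((c⁻¹ : ℝ) : ℂ) * s * s = 1 := by rw [← hss]; ring
    rw [this, one_smul]
  refine ⟨F, ?_, ?_, ?_, ?_, n, fun j => s • v j, ?_, ?_, ?_⟩
  · rintro _ ⟨b, rfl⟩
    refine ⟨((c⁻¹ : ℝ) : ℂ) • E (p * b * p), A.smul_mem (hrange _) _, ?_⟩
    rw [hpA _ (A.smul_mem (hrange _) _), hF, smul_mul_assoc]
  · rintro _ ⟨a, ha, rfl⟩
    rw [hpA a ha, hF, hl a ha, hEp', mul_smul_comm, mul_one, smul_mul_assoc, smul_smul, hcc,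
      one_smul]
  · rintro _ ⟨a, ha, rfl⟩ _ ⟨a', ha', rfl⟩ _ ⟨b, rfl⟩
    have : p * a * p * (p * b * p) * (p * a' * p) = a * (p * b * p) * a' := by
      rw [hpA a ha, hpcomm a' ha']
      simp only [mul_assoc, hpp]
      rw [← hpcomm a' ha']
      simp only [← mul_assoc]
      rw [mul_assoc a p p, hpp]
      simp only [mul_assoc]
      rw [← mul_assoc p p, hpp]
    rw [this, hF, hF, hbimod a ha a' ha', mul_smul_comm, smul_mul_assoc]
    congr 1
    rw [hpA a ha, hpcomm a' ha']
    simp only [mul_assoc, hpp]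
    rw [← mul_assoc p (E _), hpcomm _ (hrange _)]
    simp only [mul_assoc]
    rw [← hpcomm a' ha', ← mul_assoc p p, hpp, ← mul_assoc p p, hpp]
  · intro x _ hx
    rw [hF, Complex.coe_smul]
    refine smul_nonneg (inv_nonneg.2 hc0.le) ?_
    rw [← hpA _ (hrange x)]
    have := star_left_conjugate_nonneg (hpos x hx) p
    rwa [hps] at this
  · intro j
    refine ⟨s • ∑ k, u k * (q k j : B), ?_⟩
    simp only [mul_smul_comm, smul_mul_assoc]
    rw [← hv j]
  · rintro _ ⟨b, rfl⟩
    apply hrec2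
    simp only [← mul_assoc, hpp]
    simp only [mul_assoc, hpp]
  · rintro _ ⟨b, rfl⟩
    have := hrec2 (star (p * b * p)) (by
      simp only [star_mul, hps]
      simp only [← mul_assoc, hpp]
      simp only [mul_assoc, hpp])
    have := congrArg star this
    rw [star_star, star_sum] at this
    conv_lhs => rw [this]
    refine Finset.sum_congr rfl fun j _ => ?_
    rw [star_mul, ← hFstar, star_mul, star_star, star_star]
end

section
/- Let 1 ∈ A ⊆ B be an inclusion of unital C*-algebras, and let E : B → A be a conditional expectation with quasi-basis u_1, …, u_n satisfying E(c b) = E(b c) for all c ∈ A' ∩ B and all b ∈ B. Let p ∈ A' ∩ B be a nonzero projection, and suppose E(p) = λ·1 for some real λ > 0. Then the map F : pBp → pAp defined by F(x) = λ^{-1} E(x) p is a conditional expectation from pBp onto pAp (where pAp = {p a p : a ∈ A} and pBp = {p b p : b ∈ B}), and the family (λ^{1/2} p u_j p)_{j=1}^n is a quasi-basis for F: x = Σ_{j=1}^n λ^{1/2} p u_j p · F(λ^{1/2} p u_j^* p · x) = Σ_{j=1}^n F(x · λ^{1/2} p u_j p) · λ^{1/2} p u_j^* p for all x ∈ pBp.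 -/
/-- Let `1 ∈ A ⊆ B` be an inclusion of unital C*-algebras, `E : B → A` a conditional
expectation with quasi-basis `u₁, …, uₙ` satisfying `E (c b) = E (b c)` for `c ∈ A' ∩ B`,
and let `p ∈ A' ∩ B` be a nonzero projection with `E (p) = λ • 1`, `λ > 0`.  Then
`F (x) = λ⁻¹ E (x) p` is a conditional expectation from `p B p` onto `p A p`, and
`(√λ p uⱼ p)ⱼ` is a quasi-basis for `F`. -/
theorem cutdown_conditional_expectation_formula
    {B : Type*} [CStarAlgebra B] [PartialOrder B] [StarOrderedRing B]
    (A : StarSubalgebra ℂ B) (hA : IsClosed (A : Set B))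
    (E : B →ₗ[ℂ] B)
    (hrange : ∀ x : B, E x ∈ A)
    (hid : ∀ x ∈ A, E x = x)
    (hbimod : ∀ a ∈ A, ∀ c ∈ A, ∀ x : B, E (a * x * c) = a * E x * c)
    (hpos : ∀ x : B, 0 ≤ x → 0 ≤ E x)
    (n : ℕ) (u : Fin n → B)
    (hqb₁ : ∀ b : B, b = ∑ j, u j * E (star (u j) * b))
    (hqb₂ : ∀ b : B, b = ∑ j, E (b * u j) * star (u j))
    (hEcomm : ∀ c : B, (∀ a ∈ A, c * a = a * c) → ∀ b : B, E (c * b) = E (b * c))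
    (p : B) (hpproj : star p = p ∧ p * p = p) (hp0 : p ≠ 0)
    (hpcomm : ∀ a ∈ A, p * a = a * p)
    (lam : ℝ) (hlam : 0 < lam) (hEp : E p = (lam : ℂ) • (1 : B))
    (F : B → B) (hF : ∀ x : B, F x = ((lam⁻¹ : ℝ) : ℂ) • (E x * p)) :
    (∀ x ∈ {z : B | ∃ b : B, z = p * b * p},
      F x ∈ {z : B | ∃ a ∈ A, z = p * a * p}) ∧
    (∀ y ∈ {z : B | ∃ a ∈ A, z = p * a * p}, F y = y) ∧
    (∀ y ∈ {z : B | ∃ a ∈ A, z = p * a * p},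
      ∀ y' ∈ {z : B | ∃ a ∈ A, z = p * a * p},
      ∀ x ∈ {z : B | ∃ b : B, z = p * b * p}, F (y * x * y') = y * F x * y') ∧
    (∀ x ∈ {z : B | ∃ b : B, z = p * b * p}, 0 ≤ x → 0 ≤ F x) ∧
    (∀ x ∈ {z : B | ∃ b : B, z = p * b * p},
      x = ∑ j, ((Real.sqrt lam : ℂ) • (p * u j * p)) *
        F (((Real.sqrt lam : ℂ) • (p * star (u j) * p)) * x)) ∧
    (∀ x ∈ {z : B | ∃ b : B, z = p * b * p},
      x = ∑ j, F (x * ((Real.sqrt lam : ℂ) • (p * u j * p))) *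
        ((Real.sqrt lam : ℂ) • (p * star (u j) * p))) := by
  obtain ⟨hps, hpp⟩ := hpproj
  have hl0 : (lam : ℂ) ≠ 0 := by exact_mod_cast hlam.ne'
  have hpEp : ∀ x, p * E x = E x * p := fun x => hpcomm _ (hrange x)
  have hpap : ∀ a ∈ A, p * a * p = a * p := fun a ha => by
    rw [hpcomm a ha, mul_assoc, hpp]
  have hleft : ∀ b, p * (p * b * p) = p * b * p := fun b => by
    rw [← mul_assoc, ← mul_assoc, hpp]
  have hright : ∀ b, (p * b * p) * p = p * b * p := fun b => by
    rw [mul_assoc, hpp]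
  have hEl : ∀ a ∈ A, ∀ x, E (a * x) = a * E x := fun a ha x => by
    simpa using hbimod a ha 1 (one_mem A) x
  have hsq : (Real.sqrt lam : ℂ) * (Real.sqrt lam : ℂ) = (lam : ℂ) := by
    exact_mod_cast Real.mul_self_sqrt hlam.le
  have hscal : (Real.sqrt lam : ℂ) * (((lam⁻¹ : ℝ) : ℂ) * (Real.sqrt lam : ℂ)) = 1 := by
    rw [mul_left_comm, hsq, Complex.ofReal_inv, inv_mul_cancel₀ hl0]
  have hEc := hEcomm p hpcomm
  refine ⟨?_, ?_, ?_, ?_, ?_, ?_⟩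
  · rintro x -
    refine ⟨((lam⁻¹ : ℝ) : ℂ) • E x, A.smul_mem (hrange x) _, ?_⟩
    rw [hpap _ (A.smul_mem (hrange x) _), hF, smul_mul_assoc]
  · rintro y ⟨a, ha, rfl⟩
    rw [hF, hpap a ha, hEl a ha, hEp, mul_smul_comm, mul_one, smul_mul_assoc, smul_smul,
      Complex.ofReal_inv, inv_mul_cancel₀ hl0, one_smul]
  · rintro y ⟨a, ha, rfl⟩ y' ⟨c, hc, rfl⟩ x ⟨b, rfl⟩
    have h1 : p * a * p * (p * b * p) * (p * c * p) = a * (p * b * p) * c * p := by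
      rw [hpap a ha, mul_assoc a p, hleft, hpcomm c hc, mul_assoc c p p, hpp, ← mul_assoc]
    have h2 : E (a * (p * b * p) * c * p) = a * E (p * b * p) * c := by
      rw [mul_assoc _ c p, ← hpcomm c hc, ← mul_assoc, mul_assoc a _ p, hright, hbimod a ha c hc]
    rw [hF, hF, h1, h2, hpap a ha, hpap c hc, mul_smul_comm, smul_mul_assoc]
    congr 1
    calc a * E (p * b * p) * c * p = a * E (p * b * p) * (c * p) := by rw [mul_assoc]
      _ = a * E (p * b * p) * (p * (c * p)) := by
        rw [← mul_assoc p, hpcomm c hc, mul_assoc c, hpp]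
      _ = a * (p * E (p * b * p)) * (p * (c * p)) := by
        rw [hpEp]
        simp only [mul_assoc]
        rw [← mul_assoc p p, hpp]
      _ = _ := by
        simp only [mul_assoc]
  · rintro x - hx
    have h : 0 ≤ E x * p := by
      have := star_left_conjugate_nonneg (hpos x hx) p
      rwa [hps, hpap _ (hrange x)] at this
    rw [hF, Complex.coe_smul]
    exact smul_nonneg (inv_nonneg.2 hlam.le) h
  · rintro x ⟨b, rfl⟩
    set x := p * b * p with hx
    have hl : p * x = x := hleft b
    have hr : x * p = x := hright b
    have key : ∀ j, ((Real.sqrt lam : ℂ) • (p * u j * p)) *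
        F (((Real.sqrt lam : ℂ) • (p * star (u j) * p)) * x)
        = p * (u j * E (star (u j) * x)) * p := fun j => by
      have e : E (p * star (u j) * p * x) = E (star (u j) * x) := by
        rw [mul_assoc _ p x, hl, mul_assoc p, hEc, mul_assoc, hr]
      rw [hF, smul_mul_assoc _ _ x, map_smul, e, smul_mul_assoc, smul_mul_assoc, mul_smul_comm,
        mul_smul_comm, smul_smul, smul_smul, mul_assoc (Real.sqrt lam : ℂ), hscal, one_smul, ← hpEp]
      rw [mul_assoc _ p, ← mul_assoc p p, hpp, hpEp]
      simp only [mul_assoc]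
    rw [Finset.sum_congr rfl fun j _ => key j, ← Finset.sum_mul, ← Finset.mul_sum, ← hqb₁, hl, hr]
  · rintro x ⟨b, rfl⟩
    set x := p * b * p with hx
    have hl : p * x = x := hleft b
    have hr : x * p = x := hright b
    have key : ∀ j, F (x * ((Real.sqrt lam : ℂ) • (p * u j * p))) *
        ((Real.sqrt lam : ℂ) • (p * star (u j) * p))
        = p * (E (x * u j) * star (u j)) * p := fun j => by
      have e : E (x * (p * u j * p)) = E (x * u j) := by
        rw [← mul_assoc, ← mul_assoc, hr, ← hEc, ← mul_assoc, hl]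
      rw [hF, mul_smul_comm _ x, map_smul, e, smul_mul_assoc, smul_mul_assoc, mul_smul_comm,
        smul_comm, smul_mul_assoc, smul_smul, smul_smul, mul_assoc, hscal, one_smul]
      rw [← mul_assoc, ← mul_assoc, mul_assoc _ p p, hpp, ← hpEp]
      simp only [mul_assoc]
    rw [Finset.sum_congr rfl fun j _ => key j, ← Finset.sum_mul, ← Finset.mul_sum, ← hqb₂, hl, hr]
end

section
/- Let C be a unital C*-algebra, let z be a positive invertible element of the center of C, and let e_1, …, e_N be projections in C satisfying the Jones relations e_k e_{k+1} e_k = z^{-1} e_k, e_{k+1} e_k e_{k+1} = z^{-1} e_{k+1}, and e_k e_l = e_l e_k for |k − l| > 1 (all indices in {1, …, N}). Then for every m ≥ 1 and j ≥ 0 with 2m + j − 1 ≤ N: (e_{j+1} e_{j+2} ⋯ e_{m+j−1}) g_m^{(j)} (e_{m+j−1} e_{m+j−2} ⋯ e_{j+1}) = z^{−2(m−1)} g_{m−1}^{(j+2)} e_{j+1}, where for m = 1 the outer products are empty (equal to 1) and the identity reads g_1^{(j)} = e_{j+1}. -/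
/-- The descending product `e a * e (a - 1) * ⋯ * e b` (equal to `1` when `b > a`). -/
def dProd {C : Type*} [Monoid C] (e : ℕ → C) (a b : ℕ) : C :=
  ((List.range (a + 1 - b)).map fun i => e (a - i)).prod

/-- The ascending product `e a * e (a + 1) * ⋯ * e b` (equal to `1` when `a > b`). -/
def aProd {C : Type*} [Monoid C] (e : ℕ → C) (a b : ℕ) : C :=
  ((List.range (b + 1 - a)).map fun i => e (a + i)).prod

/-- `gElt e n j` is the element
`g_n^{(j)} = (e_{n+j} e_{n+j-1} ⋯ e_{j+1}) (e_{n+j+1} e_{n+j} ⋯ e_{j+2}) ⋯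
(e_{2n+j-1} e_{2n+j-2} ⋯ e_{n+j})`, a product of `n` blocks whose `i`-th block
(`1 ≤ i ≤ n`) is the descending product `e_{n+j+i-1} e_{n+j+i-2} ⋯ e_{j+i}`;
and `g_0^{(j)} = 1`. -/
def gElt {C : Type*} [Monoid C] (e : ℕ → C) (n j : ℕ) : C :=
  ((List.range n).map fun i => dProd e (n + j + i) (j + i + 1)).prod

/-- ascending product of `n` factors starting at `a` -/
def jUp {C : Type*} [Monoid C] (e : ℕ → C) (a : ℕ) : ℕ → C
  | 0 => 1
  | n + 1 => jUp e a n * e (a + n)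

/-- descending product of `n` factors ending at `a` -/
def jDn {C : Type*} [Monoid C] (e : ℕ → C) (a : ℕ) : ℕ → C
  | 0 => 1
  | n + 1 => e (a + n) * jDn e a n

theorem jUp_eq {C : Type*} [Monoid C] (e : ℕ → C) (a n b : ℕ) (h : b + 1 = a + n) :
    aProd e a b = jUp e a n := by
  have h' : b + 1 - a = n := by omega
  unfold aProd
  rw [h']
  clear h h'
  induction n with
  | zero => simp [jUp]
  | succ n ih => rw [List.prod_range_succ, ih]; rfl

theorem jDn_eq {C : Type*} [Monoid C] (e : ℕ → C) (a n b : ℕ) (h : b + 1 = a + n) :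
    dProd e b a = jDn e a n := by
  have h' : b + 1 - a = n := by omega
  unfold dProd
  rw [h']
  clear h'
  induction n generalizing b with
  | zero => simp [jDn]
  | succ n ih =>
    rw [List.prod_range_succ']
    have hb : b = a + n := by omega
    subst hb
    simp only [jDn, Nat.sub_zero]
    congr 1
    rcases Nat.eq_zero_or_pos n with h0 | h0
    · subst h0; simp [jDn]
    · rw [← ih (a + n - 1) (by omega)]
      congr 1
      apply List.map_congr_left
      intro i _
      congr 1
      omega

theorem jDn_succ' {C : Type*} [Monoid C] (e : ℕ → C) (a n : ℕ) :
    jDn e a (n + 1) = jDn e (a + 1) n * e a := by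
  induction n with
  | zero => simp [jDn]
  | succ n ih =>
    rw [jDn, ih, jDn, mul_assoc]
    congr 2
    omega

theorem jUp_comm {C : Type*} [Monoid C] (e : ℕ → C) (a n : ℕ) (x : C)
    (h : ∀ i < n, Commute (e (a + i)) x) : Commute (jUp e a n) x := by
  induction n with
  | zero => exact Commute.one_left x
  | succ n ih =>
    exact (ih fun i hi => h i (by omega)).mul_left (h n (by omega))

theorem jDn_comm {C : Type*} [Monoid C] (e : ℕ → C) (a n : ℕ) (x : C)
    (h : ∀ i < n, Commute x (e (a + i))) : Commute x (jDn e a n) := by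
  induction n with
  | zero => exact Commute.one_right x
  | succ n ih =>
    exact (h n (by omega)).mul_right (ih fun i hi => h i (by omega))

theorem jUpDn1 {C : Type*} [Monoid C] (e : ℕ → C) (t : C) (ht : ∀ c, Commute t c) (a n : ℕ)
    (h1 : ∀ i < n, e (a + i) * e (a + i + 1) * e (a + i) = t * e (a + i)) :
    jUp e a n * jDn e a (n + 1) = t ^ n * e a := by
  induction n with
  | zero => simp [jUp, jDn]
  | succ n ih =>
    have key := h1 n (by omega)
    calc jUp e a (n + 1) * jDn e a (n + 1 + 1)
        = jUp e a n * (e (a + n) * e (a + n + 1) * e (a + n)) * jDn e a n := by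
          simp only [jUp, jDn, mul_assoc, add_assoc]
      _ = t * (jUp e a n * jDn e a (n + 1)) := by
          rw [key, jDn, ← mul_assoc, ← (ht (jUp e a n)).eq]
          simp only [mul_assoc]
      _ = _ := by rw [ih fun i hi => h1 i (by omega), pow_succ', mul_assoc]

theorem jUpDn2 {C : Type*} [Monoid C] (e : ℕ → C) (t : C) (ht : ∀ c, Commute t c) (a n : ℕ)
    (h1 : ∀ i < n, e (a + i) * e (a + i + 1) * e (a + i) = t * e (a + i)) :
    jUp e a (n + 1) * jDn e a n = t ^ n * e a := by
  induction n with
  | zero => simp [jUp, jDn]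
  | succ n ih =>
    have key := h1 n (by omega)
    calc jUp e a (n + 1 + 1) * jDn e a (n + 1)
        = jUp e a n * (e (a + n) * e (a + n + 1) * e (a + n)) * jDn e a n := by
          simp only [jUp, jDn, mul_assoc, add_assoc]
      _ = t * (jUp e a (n + 1) * jDn e a n) := by
          rw [key, jUp, ← mul_assoc, ← (ht (jUp e a n)).eq]
          simp only [mul_assoc]
      _ = _ := by rw [ih fun i hi => h1 i (by omega), pow_succ', mul_assoc]

theorem jPush {C : Type*} [Monoid C] (e : ℕ → C) (a n k N : ℕ) (ha : 1 ≤ a)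
    (hN : a + n + k ≤ N)
    (h3 : ∀ k l, 1 ≤ k → k ≤ N → 1 ≤ l → l ≤ N → (k + 1 < l ∨ l + 1 < k) →
      e k * e l = e l * e k) :
    e a * ((List.range k).map fun i => jDn e (a + i + 1) (n + 1)).prod
      = ((List.range k).map fun i => jDn e (a + i + 2) n).prod * jUp e a (k + 1) := by
  induction k with
  | zero => simp [jUp]
  | succ k ih =>
    rw [List.prod_range_succ, List.prod_range_succ, ← mul_assoc, ih (by omega), jDn_succ',
      jUp.eq_2 e a (k + 1)]
    have hc : Commute (jUp e a (k + 1)) (jDn e (a + k + 1 + 1) n) := by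
      apply jUp_comm
      intro i hi
      apply jDn_comm
      intro l hl
      exact h3 _ _ (by omega) (by omega) (by omega) (by omega) (by omega)
    have hc' := hc.eq
    simp only [mul_assoc, add_assoc] at hc' ⊢
    rw [← mul_assoc (jUp e a (k + 1)), hc']
    simp only [mul_assoc]

/-- In a unital C*-algebra with a positive invertible central element `z` and projections
`e₁, …, e_N` satisfying the Jones relations, for `m ≥ 1` and `2m + j - 1 ≤ N` one has
`(e_{j+1} ⋯ e_{m+j-1}) g_m^{(j)} (e_{m+j-1} ⋯ e_{j+1})
  = z^{-2(m-1)} g_{m-1}^{(j+2)} e_{j+1}`. -/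
theorem jones_g_compression
    {C : Type*} [CStarAlgebra C] [PartialOrder C] [StarOrderedRing C]
    (N : ℕ) (z : C) [Invertible z] (hzpos : 0 ≤ z) (hzc : ∀ c : C, z * c = c * z)
    (e : ℕ → C)
    (hproj : ∀ k, 1 ≤ k → k ≤ N → star (e k) = e k ∧ e k * e k = e k)
    (h1 : ∀ k, 1 ≤ k → k + 1 ≤ N → e k * e (k + 1) * e k = ⅟z * e k)
    (h2 : ∀ k, 1 ≤ k → k + 1 ≤ N → e (k + 1) * e k * e (k + 1) = ⅟z * e (k + 1))
    (h3 : ∀ k l, 1 ≤ k → k ≤ N → 1 ≤ l → l ≤ N → (k + 1 < l ∨ l + 1 < k) →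
      e k * e l = e l * e k)
    (m j : ℕ) (hm : 1 ≤ m) (hrange : 2 * m + j - 1 ≤ N) :
    aProd e (j + 1) (m + j - 1) * gElt e m j * dProd e (m + j - 1) (j + 1)
      = (⅟z) ^ (2 * (m - 1)) * gElt e (m - 1) (j + 2) * e (j + 1) := by
  obtain ⟨n, rfl⟩ : ∃ n, m = n + 1 := ⟨m - 1, by omega⟩
  have ht : ∀ c, Commute (⅟z) c := fun c => by
    have h : Commute z c := hzc c
    have := (show Commute ((unitOfInvertible z : Cˣ) : C) c from h).units_inv_left
    simpa using this
  have hr : ∀ i < n, e (j + 1 + i) * e (j + 1 + i + 1) * e (j + 1 + i) = ⅟z * e (j + 1 + i) :=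
    fun i hi => h1 _ (by omega) (by omega)
  have hg : gElt e (n + 1) j = jDn e (j + 1) (n + 1) *
      ((List.range n).map fun i => jDn e (j + 1 + i + 1) (n + 1)).prod := by
    unfold gElt
    rw [List.prod_range_succ', jDn_eq e (j + 0 + 1) (n + 1) _ (by omega)]
    congr 2
    apply List.map_congr_left
    intro i _
    rw [jDn_eq e _ (n + 1) _ (by omega)]
    congr 1
    omega
  have hg' : gElt e n (j + 2) =
      ((List.range n).map fun i => jDn e (j + 1 + i + 2) n).prod := by
    unfold gElt
    congr 1
    apply List.map_congr_left
    intro i _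
    rw [jDn_eq e _ n _ (by omega)]
    congr 1
    omega
  have hp := jPush e (j + 1) n n N (by omega) (by omega) h3
  have e1 := jUpDn1 e (⅟z) ht (j + 1) n hr
  have e2 := jUpDn2 e (⅟z) ht (j + 1) n hr
  rw [jUp_eq e (j + 1) n _ (by omega), jDn_eq e (j + 1) n _ (by omega), hg,
    Nat.add_sub_cancel, hg', ← mul_assoc, e1, mul_assoc (⅟z ^ n), hp, mul_assoc, mul_assoc, e2,
    ← mul_assoc _ (⅟z ^ n), ← ((ht _).pow_left n).eq, two_mul, pow_add]
  simp only [mul_assoc]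
end

section
/- Let C be a unital C*-algebra, let z be a positive invertible element of the center of C, and let e_1, …, e_N be projections in C satisfying the Jones relations e_k e_{k+1} e_k = z^{-1} e_k, e_{k+1} e_k e_{k+1} = z^{-1} e_{k+1}, and e_k e_l = e_l e_k for |k − l| > 1 (all indices in {1, …, N}). Then for every n ≥ 0 and j ≥ 0 with 2n + j − 1 ≤ N, the element f_n^{(j)} = z^{n(n−1)/2} g_n^{(j)} is a projection: (f_n^{(j)})* = f_n^{(j)} and (f_n^{(j)})² = f_n^{(j)}. -/
theorem dProd_comm' {C : Type*} [Monoid C] (e : ℕ → C) (a b : ℕ) (x : C)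
    (h : ∀ k, b ≤ k → k ≤ a → Commute x (e k)) : Commute x (dProd e a b) := by
  unfold dProd
  apply Commute.list_prod_right
  intro y hy
  simp only [List.mem_map, List.mem_range] at hy
  obtain ⟨i, hi, rfl⟩ := hy
  exact h _ (by omega) (by omega)

theorem dProd_left {C : Type*} [Monoid C] (e : ℕ → C) (a b : ℕ) (h : b ≤ a + 1) :
    dProd e (a + 1) b = e (a + 1) * dProd e a b := by
  unfold dProd
  rw [show a + 1 + 1 - b = (a + 1 - b) + 1 by omega, List.range_succ_eq_map]
  simp [Function.comp_def]

theorem dProd_right {C : Type*} [Monoid C] (e : ℕ → C) (a b : ℕ) (h : b ≤ a) :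
    dProd e a b = dProd e a (b + 1) * e b := by
  unfold dProd
  rw [show a + 1 - b = (a + 1 - (b + 1)) + 1 by omega, List.range_succ]
  simp [show a - (a - b) = b by omega]

/-- `e (j+2) * ⋯ * e (j+m+1)` -/
def uProd {C : Type*} [Monoid C] (e : ℕ → C) (m j : ℕ) : C :=
  ((List.range m).map fun i => e (j + 2 + i)).prod

theorem uProd_right {C : Type*} [Monoid C] (e : ℕ → C) (m j : ℕ) :
    uProd e (m + 1) j = uProd e m j * e (j + 2 + m) := by
  simp [uProd, List.range_succ]

theorem uProd_left {C : Type*} [Monoid C] (e : ℕ → C) (m j : ℕ) :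
    uProd e (m + 1) j = e (j + 2) * uProd e m (j + 1) := by
  simp only [uProd, List.range_succ_eq_map, List.map_cons, List.map_map, List.prod_cons, add_zero]
  congr 3
  funext i
  simp only [Function.comp_apply]
  congr 1
  simp only [Nat.succ_eq_add_one]
  omega

theorem prod_split {C : Type*} [Monoid C] (A b : ℕ → C) (p : ℕ)
    (h : ∀ i k, i < k → k < p → Commute (A k) (b i)) :
    ((List.range p).map fun i => A i * b i).prod
      = ((List.range p).map A).prod * ((List.range p).map b).prod := by
  induction p with
  | zero => simp
  | succ p ih =>
    have hc : Commute (A p) ((List.range p).map b).prod := by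
      apply Commute.list_prod_right
      intro y hy
      simp only [List.mem_map, List.mem_range] at hy
      obtain ⟨i, hi, rfl⟩ := hy
      exact h _ _ hi (by omega)
    simp only [List.range_succ, List.map_append, List.prod_append, List.map_cons, List.map_nil,
      List.prod_cons, List.prod_nil, mul_one]
    rw [ih (fun i k hi hk => h i k hi (by omega))]
    simp only [mul_assoc]
    congr 1
    rw [← mul_assoc, ← mul_assoc, hc.eq]

theorem gElt_succ {C : Type*} [Monoid C] (N : ℕ) (e : ℕ → C)
    (h3 : ∀ k l, 1 ≤ k → k ≤ N → 1 ≤ l → l ≤ N → (k + 1 < l ∨ l + 1 < k) →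
      e k * e l = e l * e k) (m j : ℕ) (hr : 2 * m + j + 1 ≤ N) :
    gElt e (m + 1) j
      = dProd e (m + 1 + j) (j + 2) * e (j + 1) * (gElt e m (j + 2) * uProd e m j) := by
  rw [← dProd_right _ _ _ (by omega)]
  unfold gElt uProd
  rw [← prod_split]
  · simp only [List.range_succ_eq_map, List.map_cons, List.map_map, List.prod_cons, add_zero]
    congr 2
    apply List.map_congr_left
    intro i hi
    simp only [Function.comp_apply, Nat.succ_eq_add_one]
    rw [dProd_right _ _ _ (by omega)]
    congr 2 <;> omega
  · intro i k hik hk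
    refine (dProd_comm' _ _ _ _ fun l hl hl' => ?_).symm
    exact h3 _ _ (by omega) (by omega) (by omega) (by omega) (by omega)

theorem star_uProd {C : Type*} [Monoid C] [StarMul C] (N : ℕ) (e : ℕ → C)
    (hs : ∀ k, 1 ≤ k → k ≤ N → star (e k) = e k) (m j : ℕ) (hr : m + j + 1 ≤ N) :
    star (uProd e m j) = dProd e (m + 1 + j) (j + 2) := by
  induction m with
  | zero => simp [uProd, dProd, show 1 + j - (j + 1) = 0 by omega]
  | succ m ih =>
    rw [uProd_right, star_mul, ih (by omega), hs _ (by omega) (by omega),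
      show m + 1 + 1 + j = (m + 1 + j) + 1 by omega, dProd_left _ _ _ (by omega)]
    congr 2
    omega

theorem uProd_mul_star {C : Type*} [Monoid C] [StarMul C] (N : ℕ) (e : ℕ → C) (w : C)
    (hw : ∀ c, w * c = c * w)
    (hs : ∀ k, 1 ≤ k → k ≤ N → star (e k) = e k ∧ e k * e k = e k)
    (h1 : ∀ k, 1 ≤ k → k + 1 ≤ N → e k * e (k + 1) * e k = w * e k)
    (m j : ℕ) (hr : m + j + 1 ≤ N) :
    e (j + 1) * (uProd e m j * star (uProd e m j)) * e (j + 1) = w ^ m * e (j + 1) := by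
  induction m generalizing j with
  | zero => simp [uProd, (hs (j + 1) (by omega) (by omega)).2]
  | succ m ih =>
    have h := ih (j + 1) (by omega)
    have hwm : Commute (w ^ m) (e (j + 1)) := Commute.pow_left (hw _) m
    rw [uProd_left, star_mul, (hs (j + 2) (by omega) (by omega)).1]
    calc _ = e (j + 1) * (e (j + 1 + 1) * (uProd e m (j + 1) * star (uProd e m (j + 1)))
              * e (j + 1 + 1)) * e (j + 1) := by simp only [mul_assoc]
      _ = w ^ m * (e (j + 1) * e (j + 1 + 1) * e (j + 1)) := by
          rw [h, ← mul_assoc, ← hwm.eq]; simp only [mul_assoc]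
      _ = _ := by rw [h1 _ (by omega) (by omega), pow_succ, mul_assoc]

theorem gElt_main {C : Type*} [Monoid C] [StarMul C] (N : ℕ) (e : ℕ → C) (w : C)
    (hw : ∀ c, w * c = c * w)
    (hs : ∀ k, 1 ≤ k → k ≤ N → star (e k) = e k ∧ e k * e k = e k)
    (h1 : ∀ k, 1 ≤ k → k + 1 ≤ N → e k * e (k + 1) * e k = w * e k)
    (h3 : ∀ k l, 1 ≤ k → k ≤ N → 1 ≤ l → l ≤ N → (k + 1 < l ∨ l + 1 < k) →
      e k * e l = e l * e k) (n j : ℕ) (hr : 2 * n + j - 1 ≤ N) :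
    star (gElt e n j) = gElt e n j ∧
      gElt e n j * gElt e n j = w ^ (n * (n - 1) / 2) * gElt e n j := by
  induction n generalizing j with
  | zero => simp [gElt]
  | succ m ih =>
    obtain ⟨ih1, ih2⟩ := ih (j + 2) (by omega)
    have hc : Commute (e (j + 1)) (gElt e m (j + 2)) := by
      unfold gElt
      apply Commute.list_prod_right
      intro y hy
      simp only [List.mem_map, List.mem_range] at hy
      obtain ⟨i, hi, rfl⟩ := hy
      refine dProd_comm' _ _ _ _ fun l hl hl' => ?_
      exact h3 _ _ (by omega) (by omega) (by omega) (by omega) (by omega)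
    have hu := uProd_mul_star N e w hw hs h1 m j (by omega)
    have hws : ∀ p c, w ^ p * c = c * w ^ p := fun p c => Commute.pow_left (hw c) p
    rw [gElt_succ N e h3 m j (by omega),
      ← star_uProd N e (fun k a b => (hs k a b).1) m j (by omega), Nat.triangle_succ]
    have hp := hs (j + 1) (by omega) (by omega)
    generalize gElt e m (j + 2) = h at *
    generalize uProd e m j = u at *
    generalize e (j + 1) = p at *
    generalize m * (m - 1) / 2 = t at *
    constructor
    · simp only [star_mul, star_star, ih1, hp.1]
      simp only [mul_assoc]
      rw [← mul_assoc h, ← hc.eq, mul_assoc]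
    · calc _ = star u * (p * h) * (u * star u) * (p * h) * u := by simp only [mul_assoc]
        _ = star u * h * (p * (u * star u) * p) * h * u := by
          rw [hc.eq]; nth_rewrite 2 [← hc.eq]; simp only [mul_assoc]
        _ = w ^ m * (star u * (h * p * h) * u) := by
          rw [hu, ← mul_assoc _ (w ^ m), ← hws]; simp only [mul_assoc]
        _ = w ^ m * (star u * (p * (h * h)) * u) := by rw [← hc.eq, mul_assoc p]
        _ = w ^ m * (w ^ t * (star u * p * (h * u))) := by
          rw [ih2, ← mul_assoc p, ← hws t p, mul_assoc (w ^ t), ← mul_assoc (star u) (w ^ t),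
            ← hws t (star u)]
          simp only [mul_assoc]
        _ = _ := by rw [← mul_assoc, ← pow_add, add_comm m t]

/-- In a unital C*-algebra with a positive invertible central element `z` and projections
`e₁, …, e_N` satisfying the Jones relations, for `2n + j - 1 ≤ N` the element
`f_n^{(j)} = z^{n(n-1)/2} g_n^{(j)}` is a projection. -/
theorem jones_f_isProjection
    {C : Type*} [CStarAlgebra C] [PartialOrder C] [StarOrderedRing C]
    (N : ℕ) (z : C) [Invertible z] (hzpos : 0 ≤ z) (hzc : ∀ c : C, z * c = c * z)
    (e : ℕ → C)
    (hproj : ∀ k, 1 ≤ k → k ≤ N → star (e k) = e k ∧ e k * e k = e k)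
    (h1 : ∀ k, 1 ≤ k → k + 1 ≤ N → e k * e (k + 1) * e k = ⅟z * e k)
    (h2 : ∀ k, 1 ≤ k → k + 1 ≤ N → e (k + 1) * e k * e (k + 1) = ⅟z * e (k + 1))
    (h3 : ∀ k l, 1 ≤ k → k ≤ N → 1 ≤ l → l ≤ N → (k + 1 < l ∨ l + 1 < k) →
      e k * e l = e l * e k)
    (n j : ℕ) (hrange : 2 * n + j - 1 ≤ N) :
    star (z ^ (n * (n - 1) / 2) * gElt e n j) = z ^ (n * (n - 1) / 2) * gElt e n j ∧
    (z ^ (n * (n - 1) / 2) * gElt e n j) * (z ^ (n * (n - 1) / 2) * gElt e n j)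
      = z ^ (n * (n - 1) / 2) * gElt e n j := by
  have hw : ∀ c : C, ⅟z * c = c * ⅟z := fun c => (Commute.invOf_left (hzc c : Commute z c)).eq
  obtain ⟨ha, hb⟩ := gElt_main N e (⅟z) hw hproj h1 h3 n j hrange
  have hz : star z = z := (IsSelfAdjoint.of_nonneg hzpos).star_eq
  have hzp : ∀ p c, z ^ p * c = c * z ^ p := fun p c => Commute.pow_left (hzc c) p
  generalize gElt e n j = g at *
  generalize n * (n - 1) / 2 = t at *
  constructor
  · rw [star_mul, ha, star_pow, hz, hzp]
  · have hinv : z ^ t * (⅟z) ^ t = 1 := by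
      rw [← (show Commute z (⅟z) from hzc _).mul_pow, mul_invOf_self, one_pow]
    rw [mul_assoc, ← mul_assoc g, ← hzp t g, mul_assoc (z ^ t) g g, hb, ← mul_assoc (z ^ t) _ g,
      hinv, one_mul]
end
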